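/- Let M be a matching of maximum weight among all matchings of size n/3 in G. Then w(X_i) ≥ w(Y_i) for each i ∈ {1, 3, 4, 8}, w(M_3) = w(Y_7), w(M_4) = w(Y_5), and w(Y_5) ≥ w(X_5). -/

import Mathlib

open Finset
open scoped Classical

namespace MW3PP

/-- A 3-path `xyz`: a path on three distinct vertices with middle vertex `y`. -/
structure P3 (V : Type*) where
  x : V
  y : V
  z : V
  hxy : x ≠ y
  hyz : y ≠ z
  hxz : x ≠ z

variable {V : Type*} [Fintype V] [DecidableEq V]

/-- The vertex set of a 3-path. -/
def P3.verts (p : P3 V) : Finset V := {p.x, p.y, p.z}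

/-- The two edges of a 3-path. -/
def P3.edges (p : P3 V) : Finset (Sym2 V) := {s(p.x, p.y), s(p.y, p.z)}

/-- The weight of a 3-path. -/
def P3.wt (w : Sym2 V → ℝ) (p : P3 V) : ℝ := w s(p.x, p.y) + w s(p.y, p.z)

/-- The total weight of a set of edges. -/
def ew (w : Sym2 V → ℝ) (F : Finset (Sym2 V)) : ℝ := ∑ e ∈ F, w e

/-- The total weight of a set of 3-paths. -/
def pw (w : Sym2 V → ℝ) (P : Finset (P3 V)) : ℝ := ∑ p ∈ P, p.wt w

/-- `∑_{xyz ∈ S} max (w (xy)) (w (yz))`. -/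
def maxSum (w : Sym2 V → ℝ) (S : Finset (P3 V)) : ℝ :=
  ∑ p ∈ S, max (w s(p.x, p.y)) (w s(p.y, p.z))

/-- A perfect 3-path packing: `n/3` pairwise vertex-disjoint 3-paths covering all vertices. -/
def IsPacking (P : Finset (P3 V)) : Prop :=
  P.card = Fintype.card V / 3 ∧
  (∀ p ∈ P, ∀ q ∈ P, p ≠ q → Disjoint p.verts q.verts) ∧
  (∀ v : V, ∃ p ∈ P, v ∈ p.verts)

/-- A maximum-weight perfect 3-path packing. -/
def IsMaxPacking (w : Sym2 V → ℝ) (P : Finset (P3 V)) : Prop :=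
  IsPacking P ∧ ∀ Q : Finset (P3 V), IsPacking Q → pw w Q ≤ pw w P

/-- A matching: a set of pairwise vertex-disjoint (non-loop) edges. -/
def IsMatching (M : Finset (Sym2 V)) : Prop :=
  (∀ e ∈ M, ¬ e.IsDiag) ∧
  ∀ e ∈ M, ∀ f ∈ M, e ≠ f → ∀ v : V, v ∈ e → v ∉ f

/-- A maximum-weight matching among all matchings of size `k`. -/
def IsMaxMatchingOfSize (w : Sym2 V → ℝ) (k : ℕ) (M : Finset (Sym2 V)) : Prop :=
  IsMatching M ∧ M.card = k ∧
  ∀ M' : Finset (Sym2 V), IsMatching M' → M'.card = k → ew w M' ≤ ew w M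

/-- `v ∈ V(M)` : vertex `v` is covered by the matching `M`. -/
def covered (M : Finset (Sym2 V)) (v : V) : Prop := ∃ e ∈ M, v ∈ e

/-- `e_u` : the edge of `M` containing `u` (junk value if there is none). -/
noncomputable def eMatch (M : Finset (Sym2 V)) (u : V) : Sym2 V :=
  if h : ∃ e ∈ M, u ∈ e then h.choose else s(u, u)

/-- The cost `c` of an edge with respect to a matching `M`:
`c(uv) = w(uv) - min (w (e_u)) (w (e_v))` if both endpoints are covered by `M`,
and `c(uv) = w(uv)` otherwise. -/
noncomputable def cost (w : Sym2 V → ℝ) (M : Finset (Sym2 V)) : Sym2 V → ℝ :=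
  Sym2.lift ⟨fun u v =>
    if covered M u ∧ covered M v then
      w s(u, v) - min (w (eMatch M u)) (w (eMatch M v))
    else w s(u, v), by
      intro u v
      dsimp only
      by_cases h : covered M u ∧ covered M v
      · rw [if_pos h, if_pos (show covered M v ∧ covered M u from ⟨h.2, h.1⟩),
          Sym2.eq_swap, min_comm]
      · rw [if_neg h, if_neg (show ¬(covered M v ∧ covered M u) from fun h' => h ⟨h'.2, h'.1⟩),
          Sym2.eq_swap]⟩

/-- The total cost of a set of edges. -/
noncomputable def cw (w : Sym2 V → ℝ) (M F : Finset (Sym2 V)) : ℝ := ∑ e ∈ F, cost w M e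

/-- The number of vertices of the 3-path `p` covered by `M`. -/
noncomputable def kcnt (M : Finset (Sym2 V)) (p : P3 V) : ℕ :=
  (p.verts.filter fun v => covered M v).card

/-- Exactly one of the two edges of `p` lies in `M`. -/
def exOne (M : Finset (Sym2 V)) (p : P3 V) : Prop :=
  (s(p.x, p.y) ∈ M ∧ s(p.y, p.z) ∉ M) ∨ (s(p.x, p.y) ∉ M ∧ s(p.y, p.z) ∈ M)

def cls1 (M : Finset (Sym2 V)) (p : P3 V) : Prop := kcnt M p = 0
def cls2 (M : Finset (Sym2 V)) (p : P3 V) : Prop := kcnt M p = 1 ∧ ¬ covered M p.y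
def cls3 (M : Finset (Sym2 V)) (p : P3 V) : Prop := kcnt M p = 1 ∧ covered M p.y
def cls4 (M : Finset (Sym2 V)) (p : P3 V) : Prop := kcnt M p = 2 ∧ ¬ covered M p.y
def cls5 (M : Finset (Sym2 V)) (p : P3 V) : Prop := kcnt M p = 2 ∧ covered M p.y ∧ exOne M p
def cls6 (M : Finset (Sym2 V)) (p : P3 V) : Prop :=
  kcnt M p = 2 ∧ covered M p.y ∧ s(p.x, p.y) ∉ M ∧ s(p.y, p.z) ∉ M
def cls7 (M : Finset (Sym2 V)) (p : P3 V) : Prop := kcnt M p = 3 ∧ exOne M p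
def cls8 (M : Finset (Sym2 V)) (p : P3 V) : Prop :=
  kcnt M p = 3 ∧ s(p.x, p.y) ∉ M ∧ s(p.y, p.z) ∉ M

/-- The subset of a set of 3-paths satisfying a predicate. -/
noncomputable def psel (P : Finset (P3 V)) (c : P3 V → Prop) : Finset (P3 V) := P.filter c

/-- The set of all edges of the 3-paths in `S`. -/
def Esub (S : Finset (P3 V)) : Finset (Sym2 V) := S.biUnion P3.edges

/-- The heaviest edge of a 3-path (the edge `xy` in case of a tie). -/
noncomputable def heavy (w : Sym2 V → ℝ) (p : P3 V) : Sym2 V :=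
  if w s(p.y, p.z) ≤ w s(p.x, p.y) then s(p.x, p.y) else s(p.y, p.z)

noncomputable def X1 (w : Sym2 V → ℝ) (P : Finset (P3 V)) (M : Finset (Sym2 V)) :
    Finset (Sym2 V) := (psel P (cls1 M)).image (heavy w)
noncomputable def X2 (P : Finset (P3 V)) (M : Finset (Sym2 V)) : Finset (Sym2 V) :=
  (psel P (cls2 M)).image fun p => if covered M p.x then s(p.x, p.y) else s(p.y, p.z)
noncomputable def X3 (w : Sym2 V → ℝ) (P : Finset (P3 V)) (M : Finset (Sym2 V)) :
    Finset (Sym2 V) := (psel P (cls3 M)).image (heavy w)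
noncomputable def X4 (w : Sym2 V → ℝ) (P : Finset (P3 V)) (M : Finset (Sym2 V)) :
    Finset (Sym2 V) := (psel P (cls4 M)).image (heavy w)
noncomputable def X5 (P : Finset (P3 V)) (M : Finset (Sym2 V)) : Finset (Sym2 V) :=
  (psel P (cls5 M)).image fun p => if s(p.x, p.y) ∈ M then s(p.y, p.z) else s(p.x, p.y)
noncomputable def X6 (P : Finset (P3 V)) (M : Finset (Sym2 V)) : Finset (Sym2 V) :=
  (psel P (cls6 M)).image fun p => if covered M p.x then s(p.y, p.z) else s(p.x, p.y)
noncomputable def X7 (P : Finset (P3 V)) (M : Finset (Sym2 V)) : Finset (Sym2 V) :=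
  (psel P (cls7 M)).image fun p => if s(p.x, p.y) ∈ M then s(p.y, p.z) else s(p.x, p.y)
noncomputable def X8 (w : Sym2 V → ℝ) (P : Finset (P3 V)) (M : Finset (Sym2 V)) :
    Finset (Sym2 V) := (psel P (cls8 M)).image (heavy w)

noncomputable def Y1 (w : Sym2 V → ℝ) (P : Finset (P3 V)) (M : Finset (Sym2 V)) :
    Finset (Sym2 V) := Esub (psel P (cls1 M)) \ X1 w P M
noncomputable def Y2 (P : Finset (P3 V)) (M : Finset (Sym2 V)) : Finset (Sym2 V) :=
  Esub (psel P (cls2 M)) \ X2 P M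
noncomputable def Y3 (w : Sym2 V → ℝ) (P : Finset (P3 V)) (M : Finset (Sym2 V)) :
    Finset (Sym2 V) := Esub (psel P (cls3 M)) \ X3 w P M
noncomputable def Y4 (w : Sym2 V → ℝ) (P : Finset (P3 V)) (M : Finset (Sym2 V)) :
    Finset (Sym2 V) := Esub (psel P (cls4 M)) \ X4 w P M
noncomputable def Y5 (P : Finset (P3 V)) (M : Finset (Sym2 V)) : Finset (Sym2 V) :=
  Esub (psel P (cls5 M)) \ X5 P M
noncomputable def Y6 (P : Finset (P3 V)) (M : Finset (Sym2 V)) : Finset (Sym2 V) :=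
  Esub (psel P (cls6 M)) \ X6 P M
noncomputable def Y7 (P : Finset (P3 V)) (M : Finset (Sym2 V)) : Finset (Sym2 V) :=
  Esub (psel P (cls7 M)) \ X7 P M
noncomputable def Y8 (w : Sym2 V → ℝ) (P : Finset (P3 V)) (M : Finset (Sym2 V)) :
    Finset (Sym2 V) := Esub (psel P (cls8 M)) \ X8 w P M

/-- An edge is a middle edge (w.r.t. `M`) if exactly one of its endpoints lies in `V(M)`. -/
def isMiddle (M : Finset (Sym2 V)) (e : Sym2 V) : Prop :=
  ∃ u v : V, e = s(u, v) ∧ covered M u ∧ ¬ covered M v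

/-- Two edges share a vertex. -/
def shares (e f : Sym2 V) : Prop := ∃ v, v ∈ e ∧ v ∈ f

/-- `g` is a middle edge of some 3-path in `S`. -/
def middleIn (M : Finset (Sym2 V)) (S : Finset (P3 V)) (g : Sym2 V) : Prop :=
  (∃ p ∈ S, g ∈ p.edges) ∧ isMiddle M g

/-- The 3-paths of `P` lying in classes 2, 3 or 4. -/
noncomputable def P234 (P : Finset (P3 V)) (M : Finset (Sym2 V)) : Finset (P3 V) :=
  psel P fun p => cls2 M p ∨ cls3 M p ∨ cls4 M p

/-- `M_1`: edges of `M` sharing a vertex with at least one middle edge of a 3-path of `P*_6`. -/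
noncomputable def Mset1 (P : Finset (P3 V)) (M : Finset (Sym2 V)) : Finset (Sym2 V) :=
  M.filter fun f => ∃ g, middleIn M (psel P (cls6 M)) g ∧ shares f g

/-- `M_2`: edges of `M` sharing a vertex with at least one middle edge, all middle edges met
belonging to 3-paths of `P*_2 ∪ P*_3 ∪ P*_4`. -/
noncomputable def Mset2 (P : Finset (P3 V)) (M : Finset (Sym2 V)) : Finset (Sym2 V) :=
  M.filter fun f =>
    (∃ g, middleIn M P g ∧ shares f g) ∧
    ∀ g, middleIn M P g → shares f g → middleIn M (P234 P M) g

/-- `M_3 = M ∩ E(P*_7)`. -/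
noncomputable def Mset3 (P : Finset (P3 V)) (M : Finset (Sym2 V)) : Finset (Sym2 V) :=
  M ∩ Esub (psel P (cls7 M))

/-- `M_4 = M ∩ E(P*_5)`. -/
noncomputable def Mset4 (P : Finset (P3 V)) (M : Finset (Sym2 V)) : Finset (Sym2 V) :=
  M ∩ Esub (psel P (cls5 M))

/-- The middle edges of 3-paths of `P*_6`. -/
noncomputable def mid6 (P : Finset (P3 V)) (M : Finset (Sym2 V)) : Finset (Sym2 V) :=
  (Esub (psel P (cls6 M))).filter (isMiddle M)

/-- `M'_1`: edges of `M_1` meeting exactly one middle edge of a 3-path of `P*_6` and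
no middle edge of a 3-path of `P*_2 ∪ P*_3 ∪ P*_4`. -/
noncomputable def Mset1' (P : Finset (P3 V)) (M : Finset (Sym2 V)) : Finset (Sym2 V) :=
  (Mset1 P M).filter fun f =>
    ((mid6 P M).filter fun g => shares f g).card = 1 ∧
    ∀ g, middleIn M (P234 P M) g → ¬ shares f g

/-- `M''_1`: edges of `M_1` meeting two middle edges of 3-paths of `P*_6`. -/
noncomputable def Mset1'' (P : Finset (P3 V)) (M : Finset (Sym2 V)) : Finset (Sym2 V) :=
  (Mset1 P M).filter fun f => ((mid6 P M).filter fun g => shares f g).card = 2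

/-- `M'''_1`: edges of `M_1` meeting exactly one middle edge of a 3-path of `P*_6` and
at least one middle edge of a 3-path of `P*_2 ∪ P*_3 ∪ P*_4`. -/
noncomputable def Mset1''' (P : Finset (P3 V)) (M : Finset (Sym2 V)) : Finset (Sym2 V) :=
  (Mset1 P M).filter fun f =>
    ((mid6 P M).filter fun g => shares f g).card = 1 ∧
    ∃ g, middleIn M (P234 P M) g ∧ shares f g

/-- Assumption on `P*`: for every 3-path `xyz ∈ P*` with `y ∉ V(M)` and `x, z ∈ V(M)`,
the vertices `x` and `z` lie in two distinct edges of `M`. -/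
def Ass (P : Finset (P3 V)) (M : Finset (Sym2 V)) : Prop :=
  ∀ p ∈ P, ¬ covered M p.y → covered M p.x → covered M p.z →
    ∃ e ∈ M, ∃ f ∈ M, p.x ∈ e ∧ p.z ∈ f ∧ e ≠ f

/-- An admissible edge w.r.t. `M`: either both endpoints are in `V(M)` and lie in two distinct
edges of `M`, or exactly one endpoint is in `V(M)`. -/
def goodEdge (M : Finset (Sym2 V)) (e : Sym2 V) : Prop :=
  (∃ u v : V, e = s(u, v) ∧ covered M u ∧ covered M v ∧ ∀ f ∈ M, ¬(u ∈ f ∧ v ∈ f)) ∨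
  (∃ u v : V, e = s(u, v) ∧ covered M u ∧ ¬ covered M v)


omit [Fintype V] in
theorem P3.y_mem_of_mem_edges {p : P3 V} {e : Sym2 V} (h : e ∈ p.edges) : p.y ∈ e := by
  simp only [P3.edges, Finset.mem_insert, Finset.mem_singleton] at h
  rcases h with rfl | rfl <;> simp

omit [Fintype V] in
theorem P3.mem_verts_of_mem_edges {p : P3 V} {e : Sym2 V} (h : e ∈ p.edges) {v : V}
    (hv : v ∈ e) : v ∈ p.verts := by
  simp only [P3.edges, Finset.mem_insert, Finset.mem_singleton] at h
  rcases h with rfl | rfl <;> rw [Sym2.mem_iff] at hv <;> rcases hv with rfl | rfl <;>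
    simp [P3.verts]

theorem IsPacking.injOn_of_mem_edges {P : Finset (P3 V)} (hP : IsPacking P)
    {f : P3 V → Sym2 V} (hf : ∀ p, f p ∈ p.edges) : Set.InjOn f P := by
  intro p hp q hq hpq
  by_contra hne
  have hy : p.y ∈ q.verts :=
    P3.mem_verts_of_mem_edges (hf q) (hpq ▸ P3.y_mem_of_mem_edges (hf p))
  exact Finset.disjoint_left.mp (hP.2.1 p hp q hq hne) (by simp [P3.verts]) hy

/-- If `A` is covered by edges `g p`, `p ∈ S`, each no heavier than the edge `f p` of `p`, then
`A` weighs at most as much as the edges `f p` together. -/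
theorem IsPacking.ew_le_ew_image {P S : Finset (P3 V)} (hP : IsPacking P) (hS : S ⊆ P)
    {w : Sym2 V → ℝ} (hw : ∀ e, 0 ≤ w e) {f g : P3 V → Sym2 V} (hf : ∀ p, f p ∈ p.edges)
    (hgf : ∀ p ∈ S, w (g p) ≤ w (f p)) {A : Finset (Sym2 V)} (hA : A ⊆ S.image g) :
    ew w A ≤ ew w (S.image f) := by
  have hinj : Set.InjOn f S := (hP.injOn_of_mem_edges hf).mono hS
  calc ew w A ≤ ew w (S.image g) :=
        Finset.sum_le_sum_of_subset_of_nonneg hA fun e _ _ => hw e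
    _ ≤ ∑ p ∈ S, w (g p) := Finset.sum_image_le_of_nonneg fun e _ => hw e
    _ ≤ ∑ p ∈ S, w (f p) := Finset.sum_le_sum hgf
    _ = ew w (S.image f) := (Finset.sum_image hinj).symm

omit [Fintype V] in
theorem heavy_mem_edges (w : Sym2 V → ℝ) (p : P3 V) : heavy w p ∈ p.edges := by
  unfold heavy P3.edges
  split_ifs <;> simp

theorem IsPacking.ew_sdiff_heavy_le {P S : Finset (P3 V)} (hP : IsPacking P) (hS : S ⊆ P)
    {w : Sym2 V → ℝ} (hw : ∀ e, 0 ≤ w e) :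
    ew w (Esub S \ S.image (heavy w)) ≤ ew w (S.image (heavy w)) := by
  refine hP.ew_le_ew_image hS hw (heavy_mem_edges w)
    (g := fun p => if w s(p.y, p.z) ≤ w s(p.x, p.y) then s(p.y, p.z) else s(p.x, p.y)) ?_ ?_
  · intro p _
    unfold heavy
    split_ifs with h
    · exact h
    · exact (not_le.mp h).le
  · intro e he
    simp only [Esub, Finset.mem_sdiff, Finset.mem_biUnion, Finset.mem_image, P3.edges,
      Finset.mem_insert, Finset.mem_singleton, not_exists, not_and] at he ⊢
    obtain ⟨⟨p, hp, he⟩, hne⟩ := he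
    refine ⟨p, hp, ?_⟩
    have := hne p hp
    unfold heavy at this
    split_ifs at this ⊢ with h <;> grind

omit [Fintype V] in
/-- If every path of `S` has exactly one edge in `M`, the edges of `S` left after removing the
edges outside `M` are the edges of `S` in `M`. -/
theorem inter_Esub_eq_sdiff {M : Finset (Sym2 V)} {S : Finset (P3 V)}
    (hS : ∀ p ∈ S, exOne M p) :
    M ∩ Esub S = Esub S \
      S.image fun p => if s(p.x, p.y) ∈ M then s(p.y, p.z) else s(p.x, p.y) := by
  ext e
  simp only [Esub, Finset.mem_inter, Finset.mem_sdiff, Finset.mem_biUnion, Finset.mem_image,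
    P3.edges, Finset.mem_insert, Finset.mem_singleton, not_exists, not_and]
  constructor
  · rintro ⟨heM, h⟩
    refine ⟨h, fun p hp hpe => ?_⟩
    rcases hS p hp with h' | h' <;> split_ifs at hpe <;> grind
  · rintro ⟨⟨p, hp, he⟩, hne⟩
    refine ⟨?_, p, hp, he⟩
    have := hne p hp
    rcases hS p hp with h' | h' <;> split_ifs at this <;> grind

omit [Fintype V] in
/-- Exchanging a matching edge `ab` for an edge `bc` with `c` uncovered does not increase the
weight of a maximum-weight matching. -/
theorem IsMaxMatchingOfSize.weight_le_of_not_covered {w : Sym2 V → ℝ} {k : ℕ}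
    {M : Finset (Sym2 V)} (hM : IsMaxMatchingOfSize w k M) {a b c : V} (hab : s(a, b) ∈ M)
    (hc : ¬ covered M c) : w s(b, c) ≤ w s(a, b) := by
  obtain ⟨⟨hdiag, hdisj⟩, hcard, hmax⟩ := hM
  have hcM : ∀ e ∈ M, c ∉ e := fun e he hce => hc ⟨e, he, hce⟩
  have hbc : b ≠ c := by
    rintro rfl
    exact hcM _ hab (by simp)
  have hnot : s(b, c) ∉ M.erase s(a, b) := fun h =>
    hcM _ (Finset.mem_of_mem_erase h) (by simp)
  have hnew : ∀ e ∈ M.erase s(a, b), ∀ v, v ∈ s(b, c) → v ∉ e := by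
    intro e he v hv hve
    obtain ⟨hne, heM⟩ := Finset.mem_erase.mp he
    rcases Sym2.mem_iff.mp hv with rfl | rfl
    · exact hdisj e heM _ hab hne v hve (by simp)
    · exact hcM e heM hve
  have hle := hmax (insert s(b, c) (M.erase s(a, b))) ⟨?_, ?_⟩ ?_
  · unfold ew at hle
    rw [Finset.sum_insert hnot] at hle
    have := Finset.add_sum_erase M w hab
    linarith
  · intro e he
    rcases Finset.mem_insert.mp he with rfl | he
    · simpa using hbc
    · exact hdiag e (Finset.mem_of_mem_erase he)
  · intro e he f hf hne v hve hvf
    rcases Finset.mem_insert.mp he with rfl | he <;> rcases Finset.mem_insert.mp hf with rfl | hf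
    · exact hne rfl
    · exact hnew f hf v hve hvf
    · exact hnew e he v hvf hve
    · exact hdisj e (Finset.mem_of_mem_erase he) f (Finset.mem_of_mem_erase hf) hne v hve hvf
  · rw [Finset.card_insert_of_notMem hnot, Finset.card_erase_add_one hab, hcard]

omit [Fintype V] in
theorem kcnt_eq_three {M : Finset (Sym2 V)} {p : P3 V} (hx : covered M p.x)
    (hy : covered M p.y) (hz : covered M p.z) : kcnt M p = 3 := by
  have hfilter : (p.verts.filter fun v => covered M v) = p.verts :=
    Finset.filter_true_of_mem (by simp [P3.verts, hx, hy, hz])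
  rw [kcnt, hfilter, P3.verts, Finset.card_eq_three]
  exact ⟨p.x, p.y, p.z, p.hxy, p.hxz, p.hyz, rfl⟩

omit [Fintype V] in
theorem cls5.weight_le {w : Sym2 V → ℝ} {k : ℕ} {M : Finset (Sym2 V)}
    (hM : IsMaxMatchingOfSize w k M) {p : P3 V} (hp : cls5 M p) :
    w (if s(p.x, p.y) ∈ M then s(p.y, p.z) else s(p.x, p.y)) ≤
      w (if s(p.x, p.y) ∈ M then s(p.x, p.y) else s(p.y, p.z)) := by
  obtain ⟨hk, hy, hex⟩ := hp
  rcases hex with ⟨hin, -⟩ | ⟨hout, hin⟩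
  · have hz : ¬ covered M p.z := fun hz => by
      have := kcnt_eq_three ⟨_, hin, by simp⟩ hy hz
      omega
    simpa [hin] using hM.weight_le_of_not_covered hin hz
  · have hx : ¬ covered M p.x := fun hx => by
      have := kcnt_eq_three hx hy ⟨_, hin, by simp⟩
      omega
    rw [Sym2.eq_swap] at hin
    simpa [hout, Sym2.eq_swap] using hM.weight_le_of_not_covered hin hx

theorem IsPacking.ew_X5_le_ew_Y5 {P : Finset (P3 V)} (hP : IsPacking P) {w : Sym2 V → ℝ}
    (hw : ∀ e, 0 ≤ w e) {k : ℕ} {M : Finset (Sym2 V)} (hM : IsMaxMatchingOfSize w k M) :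
    ew w (X5 P M) ≤ ew w (Y5 P M) := by
  have hsub : ((psel P (cls5 M)).image fun p =>
      if s(p.x, p.y) ∈ M then s(p.x, p.y) else s(p.y, p.z)) ⊆ Y5 P M := by
    rw [Y5, X5, ← inter_Esub_eq_sdiff fun p hp => (Finset.mem_filter.mp hp).2.2.2]
    intro e he
    obtain ⟨p, hp, rfl⟩ := Finset.mem_image.mp he
    rw [Finset.mem_inter, Esub, Finset.mem_biUnion]
    rcases (Finset.mem_filter.mp hp).2.2.2 with ⟨h₁, -⟩ | ⟨h₁, h₂⟩
    · simpa [h₁] using ⟨p, hp, by simp [P3.edges]⟩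
    · simpa [h₁, h₂] using ⟨p, hp, by simp [P3.edges]⟩
  refine (hP.ew_le_ew_image (Finset.filter_subset _ _) hw
    (f := fun p => if s(p.x, p.y) ∈ M then s(p.x, p.y) else s(p.y, p.z)) ?_
    (fun p hp => (Finset.mem_filter.mp hp).2.weight_le hM) subset_rfl).trans
    (Finset.sum_le_sum_of_subset_of_nonneg hsub fun e _ _ => hw e)
  intro p
  unfold P3.edges
  split_ifs <;> simp

theorem statement_6 (n : ℕ) (hn : Fintype.card V = n) (h3 : 3 ∣ n)
    (w : Sym2 V → ℝ) (hw : ∀ e : Sym2 V, 0 ≤ w e)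
    (M : Finset (Sym2 V)) (hM : IsMaxMatchingOfSize w (n / 3) M)
    (Pstar : Finset (P3 V)) (hP : IsMaxPacking w Pstar) (hAss : Ass Pstar M) :
    ew w (Y1 w Pstar M) ≤ ew w (X1 w Pstar M) ∧
    ew w (Y3 w Pstar M) ≤ ew w (X3 w Pstar M) ∧
    ew w (Y4 w Pstar M) ≤ ew w (X4 w Pstar M) ∧
    ew w (Y8 w Pstar M) ≤ ew w (X8 w Pstar M) ∧
    ew w (Mset3 Pstar M) = ew w (Y7 Pstar M) ∧
    ew w (Mset4 Pstar M) = ew w (Y5 Pstar M) ∧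
    ew w (X5 Pstar M) ≤ ew w (Y5 Pstar M) := by
  refine ⟨hP.1.ew_sdiff_heavy_le (Finset.filter_subset _ _) hw,
    hP.1.ew_sdiff_heavy_le (Finset.filter_subset _ _) hw,
    hP.1.ew_sdiff_heavy_le (Finset.filter_subset _ _) hw,
    hP.1.ew_sdiff_heavy_le (Finset.filter_subset _ _) hw, ?_, ?_, hP.1.ew_X5_le_ew_Y5 hw hM⟩
  · exact congrArg (ew w) (inter_Esub_eq_sdiff fun p hp => (Finset.mem_filter.mp hp).2.2)
  · exact congrArg (ew w) (inter_Esub_eq_sdiff fun p hp => (Finset.mem_filter.mp hp).2.2.2)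

end MW3PP
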